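/- arXiv:1010.3362 — 2 statements merged into one kernel-verified Lean document; each statement's English description precedes it below -/
import Mathlib

section
/- Let P be an m×m matrix with non-negative entries which is irreducible. If the equivalence relation ∼ on {1,…,m} generated by declaring i ∼ j whenever there exists k with P_{ik} > 0 and P_{jk} > 0 has just one equivalence class, then P is strictly irreducible (i.e., PPᵀ is also irreducible). -/
open Matrix
/-- A matrix with non-negative entries is irreducible if for some `n > 0`
all entries of `A + A² + ⋯ + Aⁿ` are positive. -/
def MatrixIrreducible {m : ℕ} (A : Matrix (Fin m) (Fin m) ℝ) : Prop :=
  ∃ n : ℕ, 0 < n ∧ ∀ i j : Fin m, 0 < (∑ k ∈ Finset.range n, A ^ (k + 1)) i j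

/-!
For a non-negative matrix `P`, the `(i, j)` entry of `P * Pᵀ` is positive exactly when the rows `i`
and `j` of `P` share a positive column. So the directed graph of `P * Pᵀ` is the relation that
generates `∼`. This relation is symmetric, and it is reflexive because an irreducible matrix has no
zero row; hence its equivalence closure is already its transitive closure, and `∼` having a single
class says that the graph of `P * Pᵀ` is strongly connected.
-/

open Relation

theorem exists_path_length_pos_iff_transGen {V : Type*} [Quiver V] {i j : V} :
    (∃ p : Quiver.Path i j, 0 < p.length) ↔ TransGen (fun a b : V => Nonempty (a ⟶ b)) i j := by
  constructor
  · rintro ⟨p, hp⟩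
    induction p with
    | nil => exact absurd hp (lt_irrefl 0)
    | cons q e ih =>
      rcases q.length.eq_zero_or_pos with hq | hq
      · obtain rfl := Quiver.Path.eq_of_length_zero q hq
        exact .single ⟨e⟩
      · exact (ih hq).tail ⟨e⟩
  · intro h
    induction h with
    | single h => exact h.elim fun e => ⟨e.toPath, Nat.one_pos⟩
    | tail _ h ih =>
      obtain ⟨p, -⟩ := ih
      exact h.elim fun e => ⟨p.cons e, Nat.succ_pos _⟩

section IrreducibleMatrix

variable {n R : Type*} [Ring R] [LinearOrder R] {A : Matrix n n R}

theorem isIrreducible_iff_forall_transGen (hA : ∀ i j, 0 ≤ A i j) :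
    A.IsIrreducible ↔ ∀ i j, TransGen (fun a b => 0 < A a b) i j := by
  let := A.toQuiver
  have hedge : (fun a b : n => Nonempty (a ⟶ b)) = fun a b => 0 < A a b :=
    funext₂ fun _ _ => propext ⟨fun ⟨e⟩ => e.down, fun h => ⟨⟨h⟩⟩⟩
  simp only [isIrreducible_iff, Quiver.isSStronglyConnected_iff,
    exists_path_length_pos_iff_transGen, hedge, hA, implies_true, true_and]

theorem exists_pos_of_isIrreducible (hA : A.IsIrreducible) (i : n) : ∃ j, 0 < A i j := by
  have hcycle := (isIrreducible_iff_forall_transGen hA.nonneg).1 hA i i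
  obtain ⟨j, hij, -⟩ := TransGen.head'_iff.1 hcycle
  exact ⟨j, hij⟩

end IrreducibleMatrix

theorem matrixIrreducible_iff_isIrreducible {m : ℕ} {A : Matrix (Fin m) (Fin m) ℝ}
    (hA : ∀ i j, 0 ≤ A i j) : MatrixIrreducible A ↔ A.IsIrreducible := by
  have hpos (N : ℕ) (i j : Fin m) :
      0 < (∑ k ∈ Finset.range N, A ^ (k + 1)) i j ↔ ∃ k < N, 0 < (A ^ (k + 1)) i j := by
    rw [Matrix.sum_apply,
      Finset.sum_pos_iff_of_nonneg fun k _ => Matrix.pow_apply_nonneg hA (k + 1) i j]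
    simp only [Finset.mem_range]
  simp only [MatrixIrreducible, hpos, isIrreducible_iff_exists_pow_pos hA]
  constructor
  · rintro ⟨N, -, hN⟩ i j
    obtain ⟨k, -, hk⟩ := hN i j
    exact ⟨k + 1, k.succ_pos, hk⟩
  · intro h
    choose d hd hpow using h
    obtain ⟨N, hN⟩ := (Set.finite_range (Function.uncurry d)).bddAbove
    refine ⟨N + 1, N.succ_pos, fun i j => ⟨d i j - 1, ?_, ?_⟩⟩
    · have hle : d i j ≤ N := hN ⟨(i, j), rfl⟩
      lia
    · rw [Nat.sub_add_cancel (hd i j)]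
      exact hpow i j

section NonnegativeProduct

variable {l m n R : Type*} [Fintype m] [Semiring R] {A : Matrix l m R} {B : Matrix m n R}

theorem mul_apply_nonneg [PartialOrder R] [IsOrderedRing R] (hA : ∀ i j, 0 ≤ A i j)
    (hB : ∀ j k, 0 ≤ B j k) (i : l) (k : n) : 0 ≤ (A * B) i k :=
  Finset.sum_nonneg fun j _ => mul_nonneg (hA i j) (hB j k)

theorem mul_apply_pos_iff [LinearOrder R] [IsStrictOrderedRing R] (hA : ∀ i j, 0 ≤ A i j)
    (hB : ∀ j k, 0 ≤ B j k) {i : l} {k : n} :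
    0 < (A * B) i k ↔ ∃ j, 0 < A i j ∧ 0 < B j k := by
  have hterm (j : m) : 0 < A i j * B j k ↔ 0 < A i j ∧ 0 < B j k :=
    ⟨fun h => ⟨pos_of_mul_pos_left h (hB j k), pos_of_mul_pos_right h (hA i j)⟩,
      fun h => mul_pos h.1 h.2⟩
  rw [mul_apply, Finset.sum_pos_iff_of_nonneg fun j _ => mul_nonneg (hA i j) (hB j k)]
  simp only [hterm, Finset.mem_univ, true_and]

end NonnegativeProduct

/-- The rows `i` and `j` of `P` have a positive entry in a common column. The relation `∼` is the
equivalence relation generated by this one. -/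
def RowsOverlap {ι κ R : Type*} [Zero R] [LT R] (P : Matrix ι κ R) (i j : ι) : Prop :=
  ∃ k, 0 < P i k ∧ 0 < P j k

instance RowsOverlap.stdSymm {ι κ R : Type*} [Zero R] [LT R] (P : Matrix ι κ R) :
    Std.Symm (RowsOverlap P) where
  symm _ _ := fun ⟨k, hi, hj⟩ => ⟨k, hj, hi⟩

theorem mul_transpose_apply_nonneg {ι κ R : Type*} [Fintype κ] [Semiring R] [PartialOrder R]
    [IsOrderedRing R] {P : Matrix ι κ R} (hP : ∀ i k, 0 ≤ P i k) (i j : ι) : 0 ≤ (P * Pᵀ) i j :=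
  mul_apply_nonneg hP (fun k j => hP j k) i j

theorem mul_transpose_apply_pos_iff_rowsOverlap {ι κ R : Type*} [Fintype κ] [Semiring R]
    [LinearOrder R] [IsStrictOrderedRing R] {P : Matrix ι κ R} (hP : ∀ i k, 0 ≤ P i k) {i j : ι} :
    0 < (P * Pᵀ) i j ↔ RowsOverlap P i j :=
  mul_apply_pos_iff hP fun k j => hP j k

theorem strictly_irreducible_of_one_equivalence_class_general {ι κ R : Type*} [Fintype κ] [Ring R]
    [LinearOrder R] [IsStrictOrderedRing R] {P : Matrix ι κ R} (hP : ∀ i k, 0 ≤ P i k)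
    (hrow : ∀ i, ∃ k, 0 < P i k) (hone : ∀ i j, EqvGen (RowsOverlap P) i j) :
    (P * Pᵀ).IsIrreducible := by
  have : Std.Refl (RowsOverlap P) := ⟨fun i => (hrow i).imp fun _ hk => ⟨hk, hk⟩⟩
  rw [isIrreducible_iff_forall_transGen (mul_transpose_apply_nonneg hP)]
  simp only [mul_transpose_apply_pos_iff_rowsOverlap hP]
  rwa [EqvGen.eqvGen_eq_reflTransGen, reflTransGen_eq_transGen] at hone

/-- Let `P` be an `m × m` matrix with non-negative entries which is
irreducible.  If the equivalence relation `∼` on the index set generated by declaring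
`i ∼ j` whenever there is `k` with `P i k > 0` and `P j k > 0` has just one equivalence
class, then `P` is strictly irreducible, i.e. `P * Pᵀ` is also irreducible. -/
theorem strictly_irreducible_of_one_equivalence_class {m : ℕ}
    (P : Matrix (Fin m) (Fin m) ℝ) (hnonneg : ∀ i j, 0 ≤ P i j)
    (hirr : MatrixIrreducible P)
    (hone : ∀ i j : Fin m,
      Relation.EqvGen (fun i j => ∃ k, 0 < P i k ∧ 0 < P j k) i j) :
    MatrixIrreducible P ∧ MatrixIrreducible (P * Pᵀ) := by
  have hrow := exists_pos_of_isIrreducible ((matrixIrreducible_iff_isIrreducible hnonneg).1 hirr)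
  exact ⟨hirr, (matrixIrreducible_iff_isIrreducible (mul_transpose_apply_nonneg hnonneg)).2
    (strictly_irreducible_of_one_equivalence_class_general hnonneg hrow hone)⟩
end

section
/- Let P be the 8×8 matrix with entries in {0,1} defined by P_{kl} = 1 if and only if (k,l) ∈ {(1,1),(1,2),(2,3),(2,4),(3,7),(4,8),(5,1),(6,2),(7,5),(7,6),(8,7),(8,8)}. Then P·Pᵀ is not irreducible; consequently P is not strictly irreducible. -/
/-!
The `(i, j)` entry of `P * Pᵀ` is the scalar product of the rows `i` and `j` of `P`. Row `1` (the
paper's state `2`) leads only to columns `2` and `3`, which no other row meets, so it is orthogonal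
to all other rows. Hence `P * Pᵀ` is block triangular, and so are its powers and their sums.
-/

open Matrix

/-- A matrix is strictly irreducible if both `A` and `A * Aᵀ` are irreducible. -/
def MatrixStrictlyIrreducible {m : ℕ} (A : Matrix (Fin m) (Fin m) ℝ) : Prop :=
  MatrixIrreducible A ∧ MatrixIrreducible (A * Aᵀ)

/-- The set of allowed transitions (indices shifted down by one from the paper's
`1, …, 8` to `Fin 8`): `{(1,1),(1,2),(2,3),(2,4),(3,7),(4,8),(5,1),(6,2),(7,5),
(7,6),(8,7),(8,8)}`. -/
def modTransitions : Set (Fin 8 × Fin 8) :=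
  {(0,0), (0,1), (1,2), (1,3), (2,6), (3,7), (4,0), (5,1), (6,4), (6,5), (7,6), (7,7)}

/-- The `8 × 8` transition matrix of the continued-fraction Markov map for `PSL(2,ℤ)`:
`P k l = 1` if `(k,l)` is an allowed transition, and `P k l = 0` otherwise. -/
noncomputable def modMatrix : Matrix (Fin 8) (Fin 8) ℝ :=
  open scoped Classical in
  fun k l => if (k, l) ∈ modTransitions then 1 else 0

theorem not_matrixIrreducible_of_blockTriangular {m : ℕ} {α : Type*} [LinearOrder α]
    {A : Matrix (Fin m) (Fin m) ℝ} {b : Fin m → α} (hA : A.BlockTriangular b) {i j : Fin m}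
    (hij : b j < b i) : ¬ MatrixIrreducible A := by
  rintro ⟨n, -, hpos⟩
  have hsum : (∑ k ∈ Finset.range n, A ^ (k + 1)).BlockTriangular b :=
    sum_mem (S := blockTriangularSubsemiring ℝ b) fun k _ => hA.pow (k + 1)
  exact (hpos i j).ne' (hsum hij)

theorem not_matrixIrreducible_mul_transpose_of_row_orthogonal {m : ℕ}
    {A : Matrix (Fin m) (Fin m) ℝ} {i j : Fin m} (hA : ∀ k ≠ i, A i ⬝ᵥ A k = 0) (hj : j ≠ i) :
    ¬ MatrixIrreducible (A * Aᵀ) := by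
  have hblock : (A * Aᵀ).BlockTriangular (fun k => decide (k = i)) := by
    intro k l hlk
    obtain ⟨hl, rfl⟩ : l ≠ i ∧ k = i := by simpa [Bool.lt_iff] using hlk
    exact hA l hl
  exact not_matrixIrreducible_of_blockTriangular hblock (i := i) (j := j) (by simp [hj])

theorem dotProduct_eq_zero_of_disjoint_support {n R : Type*} [Fintype n]
    [NonUnitalNonAssocSemiring R] {v w : n → R}
    (h : Disjoint (Function.support v) (Function.support w)) : v ⬝ᵥ w = 0 := by
  refine Finset.sum_eq_zero fun l _ => ?_
  by_cases hv : v l = 0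
  · rw [hv, zero_mul]
  · rw [Function.notMem_support.mp (h.notMem_of_mem_left hv), mul_zero]

theorem mem_support_modMatrix {k l : Fin 8} :
    l ∈ Function.support (modMatrix k) ↔ (k, l) ∈ modTransitions := by
  simp [modMatrix]

theorem eq_one_of_mem_modTransitions {k l : Fin 8} (h₁ : (1, l) ∈ modTransitions)
    (hk : (k, l) ∈ modTransitions) : k = 1 := by
  have hl : l = 2 ∨ l = 3 := by simpa [modTransitions] using h₁
  rcases hl with rfl | rfl <;> simpa [modTransitions] using hk

theorem modMatrix_one_dotProduct {k : Fin 8} (hk : k ≠ 1) : modMatrix 1 ⬝ᵥ modMatrix k = 0 := by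
  refine dotProduct_eq_zero_of_disjoint_support (Set.disjoint_left.mpr fun l h₁ hl => hk ?_)
  exact eq_one_of_mem_modTransitions (mem_support_modMatrix.mp h₁) (mem_support_modMatrix.mp hl)

/-- `P * Pᵀ` is not irreducible; consequently, `P` is not strictly
irreducible. -/
theorem modMatrix_not_strictly_irreducible :
    ¬ MatrixIrreducible (modMatrix * modMatrixᵀ) ∧
    ¬ MatrixStrictlyIrreducible modMatrix := by
  have hPPt : ¬ MatrixIrreducible (modMatrix * modMatrixᵀ) :=
    not_matrixIrreducible_mul_transpose_of_row_orthogonal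
      (fun _ => modMatrix_one_dotProduct) zero_ne_one
  exact ⟨hPPt, fun hP => hPPt hP.2⟩
end
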